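/- Let α > 0, let 1 ≤ k ≤ m be integers, and let (n₁, …, n_k) be positive integers with n₁ + ⋯ + n_k = m. Then lim_{σ→0⁺} [ ((α·2^{σ−1})^k / Γ(m)) · ∫_0^∞ x^{m−1}·(1/2 + x)^{−(m − kσ)}·exp( −(α·2^{σ−1}/σ)·[ (1/2 + x)^σ − 2^{−σ} ] ) dx ] · ∏_{i=1}^{k} (1−σ)_{(n_i−1)} = ( (α/2)^k / (α/2)_{(m)} ) · ∏_{i=1}^{k} (n_i − 1)!. -/

import Mathlib

open MeasureTheory

/-- Rising factorial `(x)_(n) = x (x+1) ⋯ (x+n-1)`, with `(x)_(0) = 1`. -/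
def risingFactorial (x : ℝ) : ℕ → ℝ
  | 0 => 1
  | n + 1 => risingFactorial x n * (x + n)

/-
The factor `∏ (1 - σ)_(nᵢ - 1)` is continuous in `σ`. For the weight, the substitution `x = τ t`
normalizes the tilt `τ` to `1`, changing the mass from `a` to `a τ ^ σ`, which has the same limit
`θ`. Since `((1 + x) ^ σ - 1) / σ` decreases to `log (1 + x)`, the exponential factor is dominated
by `(1 + x) ^ (-a)` and tends to `(1 + x) ^ (-θ)`. By dominated convergence the integral tends to
the beta integral `∫ x ^ (m - 1) (1 + x) ^ (-(m + θ)) = Γ(m) Γ(θ) / Γ(m + θ) = Γ(m) / (θ)_(m)`.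
-/

open Set Filter Topology ProbabilityTheory

section RisingFactorial

lemma risingFactorial_eq_eval_ascPochhammer (x : ℝ) (n : ℕ) :
    risingFactorial x n = (ascPochhammer ℝ n).eval x := by
  induction n with
  | zero => simp [risingFactorial]
  | succ n ih => rw [risingFactorial, ih, ascPochhammer_succ_eval]

lemma continuous_risingFactorial (n : ℕ) : Continuous fun x ↦ risingFactorial x n := by
  simpa only [risingFactorial_eq_eval_ascPochhammer] using (ascPochhammer ℝ n).continuous

lemma risingFactorial_one (n : ℕ) : risingFactorial 1 n = n.factorial := by
  rw [risingFactorial_eq_eval_ascPochhammer, ascPochhammer_eval_one]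

lemma Gamma_add_natCast_eq_risingFactorial_mul {x : ℝ} (hx : 0 < x) (n : ℕ) :
    Real.Gamma (x + n) = risingFactorial x n * Real.Gamma x := by
  induction n with
  | zero => simp [risingFactorial]
  | succ n ih =>
    rw [Nat.cast_succ, ← add_assoc, Real.Gamma_add_one (by positivity), ih, risingFactorial]
    ring

lemma beta_natCast_left {x : ℝ} (hx : 0 < x) (n : ℕ) :
    beta n x = Real.Gamma n / risingFactorial x n := by
  rw [beta, add_comm, Gamma_add_natCast_eq_risingFactorial_mul hx,
    mul_div_mul_right _ _ (Real.Gamma_pos_of_pos hx).ne']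

lemma tendsto_prod_risingFactorial_one_sub {ι : Type*} (s : Finset ι) (n : ι → ℕ) :
    Tendsto (fun σ ↦ ∏ i ∈ s, risingFactorial (1 - σ) (n i)) (𝓝 0)
      (𝓝 (∏ i ∈ s, ((n i).factorial : ℝ))) := by
  have hcont : Continuous fun σ ↦ ∏ i ∈ s, risingFactorial (1 - σ) (n i) :=
    continuous_finsetProd _ fun i _ ↦
      (continuous_risingFactorial (n i)).comp (continuous_const.sub continuous_id)
  simpa only [sub_zero, risingFactorial_one] using hcont.tendsto 0

end RisingFactorial

section BetaIntegral

variable {u v : ℝ}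

lemma integral_Ioo_rpow_mul_one_sub_rpow (hu : 0 < u) (hv : 0 < v) :
    ∫ x in Ioo (0 : ℝ) 1, x ^ (u - 1) * (1 - x) ^ (v - 1) = beta u v := by
  have hreal : Complex.betaIntegral u v =
      ((∫ x in (0 : ℝ)..1, x ^ (u - 1) * (1 - x) ^ (v - 1) : ℝ) : ℂ) := by
    rw [Complex.betaIntegral, ← intervalIntegral.integral_ofReal]
    refine intervalIntegral.integral_congr fun x hx ↦ ?_
    rw [uIcc_of_le zero_le_one] at hx
    push_cast [Complex.ofReal_cpow hx.1, Complex.ofReal_cpow (sub_nonneg.2 hx.2)]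
    rfl
  rw [beta_eq_betaIntegralReal u v hu hv, hreal, Complex.ofReal_re,
    intervalIntegral.integral_of_le zero_le_one, integral_Ioc_eq_integral_Ioo]

lemma image_div_one_add_Ioi : (fun x : ℝ ↦ x / (1 + x)) '' Ioi 0 = Ioo 0 1 := by
  ext t
  constructor
  · rintro ⟨x, hx : 0 < x, rfl⟩
    exact ⟨by positivity, (div_lt_one (by positivity)).2 (by linarith)⟩
  · rintro ⟨ht₀, ht₁⟩
    have : 0 < 1 - t := sub_pos.2 ht₁
    exact ⟨t / (1 - t), div_pos ht₀ this, by field_simp; ring⟩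

lemma injOn_div_one_add_Ioi : InjOn (fun x : ℝ ↦ x / (1 + x)) (Ioi 0) := by
  intro x (hx : 0 < x) y (hy : 0 < y) hxy
  have := (div_eq_div_iff (by positivity) (by positivity)).1 hxy
  linarith

lemma hasDerivAt_div_one_add {x : ℝ} (hx : 1 + x ≠ 0) :
    HasDerivAt (fun x : ℝ ↦ x / (1 + x)) ((1 + x) ^ 2)⁻¹ x := by
  refine ((hasDerivAt_id x).div ((hasDerivAt_id x).const_add 1) hx).congr_deriv ?_
  simp

lemma integral_Ioi_rpow_mul_one_add_rpow (hu : 0 < u) (hv : 0 < v) :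
    ∫ x in Ioi (0 : ℝ), x ^ (u - 1) * (1 + x) ^ (-(u + v)) = beta u v := by
  rw [← integral_Ioo_rpow_mul_one_sub_rpow hu hv, ← image_div_one_add_Ioi,
    integral_image_eq_integral_abs_deriv_smul measurableSet_Ioi
      (fun x (hx : 0 < x) ↦ (hasDerivAt_div_one_add (by positivity)).hasDerivWithinAt)
      injOn_div_one_add_Ioi]
  refine setIntegral_congr_fun measurableSet_Ioi fun x (hx : 0 < x) ↦ ?_
  have hy : 0 < 1 + x := by positivity
  have hsub : 1 - x / (1 + x) = (1 + x)⁻¹ := by field_simp; ring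
  have hexp : -(u + v) = -(u - 1) + -(v - 1) - (2 : ℕ) := by push_cast; ring
  rw [hsub, abs_of_pos (by positivity), Real.div_rpow hx.le hy.le, Real.inv_rpow hy.le, hexp,
    Real.rpow_sub_natCast hy.ne', Real.rpow_add hy, Real.rpow_neg hy.le, Real.rpow_neg hy.le,
    smul_eq_mul]
  ring

lemma integrableOn_Ioi_rpow_mul_one_add_rpow (hu : 0 < u) (hv : 0 < v) :
    IntegrableOn (fun x : ℝ ↦ x ^ (u - 1) * (1 + x) ^ (-(u + v))) (Ioi 0) :=
  .of_integral_ne_zero <|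
    (integral_Ioi_rpow_mul_one_add_rpow hu hv).trans_ne (beta_pos hu hv).ne'

end BetaIntegral

section ExponentialFactor

lemma rpow_mul_exp_rpow_sub_one_le {y p q a σ : ℝ} (hy : 1 ≤ y) (ha : 0 ≤ a) (hσ : 0 < σ)
    (hpq : p - a ≤ q) : y ^ p * Real.exp (-(a / σ) * (y ^ σ - 1)) ≤ y ^ q := by
  have hy₀ : 0 < y := one_pos.trans_le hy
  have hlog : Real.log y * σ ≤ y ^ σ - 1 := by
    rw [Real.rpow_def_of_pos hy₀]
    linarith [Real.add_one_le_exp (Real.log y * σ)]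
  have hexp : Real.exp (-(a / σ) * (y ^ σ - 1)) ≤ y ^ (-a) := by
    rw [Real.rpow_def_of_pos hy₀ (-a), Real.exp_le_exp]
    calc -(a / σ) * (y ^ σ - 1) ≤ -(a / σ) * (Real.log y * σ) :=
          mul_le_mul_of_nonpos_left hlog (neg_nonpos.2 (by positivity))
      _ = Real.log y * -a := by field_simp
  calc y ^ p * Real.exp (-(a / σ) * (y ^ σ - 1)) ≤ y ^ p * y ^ (-a) := by gcongr
    _ = y ^ (p - a) := by rw [← Real.rpow_add hy₀, sub_eq_add_neg]
    _ ≤ y ^ q := Real.rpow_le_rpow_of_exponent_le hy hpq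

variable {a p : ℝ → ℝ} {θ : ℝ}

lemma tendsto_rpow_mul_exp_rpow_sub_one {y p₀ : ℝ} (hy : 0 < y)
    (hp : Tendsto p (𝓝[>] 0) (𝓝 p₀)) (ha : Tendsto a (𝓝[>] 0) (𝓝 θ)) :
    Tendsto (fun σ ↦ y ^ p σ * Real.exp (-(a σ / σ) * (y ^ σ - 1))) (𝓝[>] 0)
      (𝓝 (y ^ (p₀ - θ))) := by
  have hlog : Tendsto (fun σ ↦ -(a σ / σ) * (y ^ σ - 1)) (𝓝[>] 0) (𝓝 (-θ * Real.log y)) :=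
    (ha.neg.mul (tendsto_rpow_sub_one_log hy)).congr fun σ ↦ by ring
  have hlim : y ^ (p₀ - θ) = y ^ p₀ * Real.exp (-θ * Real.log y) := by
    rw [sub_eq_add_neg, Real.rpow_add hy, Real.rpow_def_of_pos hy (-θ), mul_comm (Real.log y)]
  rw [hlim]
  exact (((Real.continuous_const_rpow hy.ne').tendsto p₀).comp hp).mul hlog.rexp

lemma tendsto_integral_rpow_mul_exp_rpow_sub_one {r : ℝ} (hr : 0 < r) (hθ : 0 < θ)
    (hp : Tendsto p (𝓝[>] 0) (𝓝 (-r))) (ha : Tendsto a (𝓝[>] 0) (𝓝 θ)) :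
    Tendsto
      (fun σ ↦ ∫ x in Ioi (0 : ℝ),
        x ^ (r - 1) * ((1 + x) ^ p σ * Real.exp (-(a σ / σ) * ((1 + x) ^ σ - 1))))
      (𝓝[>] 0) (𝓝 (beta r θ)) := by
  rw [← integral_Ioi_rpow_mul_one_add_rpow hr hθ]
  refine tendsto_integral_filter_of_dominated_convergence
    (fun x ↦ x ^ (r - 1) * (1 + x) ^ (-(r + θ / 2)))
    (.of_forall fun σ ↦ Measurable.aestronglyMeasurable (by fun_prop)) ?_
    (integrableOn_Ioi_rpow_mul_one_add_rpow hr (half_pos hθ)) ?_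
  · have hexponent : ∀ᶠ σ in 𝓝[>] 0, p σ - a σ < -(r + θ / 2) :=
      (hp.sub ha).eventually_lt_const (by linarith)
    filter_upwards [hexponent, ha.eventually_const_lt hθ, self_mem_nhdsWithin] with σ hpa haσ hσ
    filter_upwards [ae_restrict_mem measurableSet_Ioi] with x (hx : 0 < x)
    rw [Real.norm_of_nonneg (by positivity)]
    gcongr
    exact rpow_mul_exp_rpow_sub_one_le (by linarith) haσ.le hσ hpa.le
  · filter_upwards [ae_restrict_mem measurableSet_Ioi] with x (hx : 0 < x)
    rw [neg_add']
    exact (tendsto_rpow_mul_exp_rpow_sub_one (by positivity) hp ha).const_mul _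

end ExponentialFactor

/-- The weight `V_{m,k}` in the exchangeable partition probability function of the normalized
generalized gamma process of total mass `a`, exponential tilt `τ` and stability `σ`, that is, the
normalization of a completely random measure with jump intensity
`a / Γ(1 - σ) * s ^ (-1 - σ) * exp (-τ * s)`. -/
noncomputable def nggWeight (a τ σ : ℝ) (m k : ℕ) : ℝ :=
  a ^ k / Real.Gamma m *
    ∫ x in Ioi (0 : ℝ), x ^ (m - 1) * (τ + x) ^ (-((m : ℝ) - k * σ)) *
      Real.exp (-(a / σ) * ((τ + x) ^ σ - τ ^ σ))

section Mass

variable {c : ℝ}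

lemma tendsto_mul_const_rpow {a : ℝ → ℝ} {θ : ℝ} (hc : 0 < c)
    (ha : Tendsto a (𝓝[>] 0) (𝓝 θ)) : Tendsto (fun σ ↦ a σ * c ^ σ) (𝓝[>] 0) (𝓝 θ) := by
  have hpow := (Real.continuous_const_rpow hc.ne').tendsto 0
  simpa using ha.mul (hpow.mono_left nhdsWithin_le_nhds)

lemma tendsto_mul_rpow_sub_one (hc : 0 < c) (α : ℝ) :
    Tendsto (fun σ : ℝ ↦ α * c ^ (σ - 1)) (𝓝[>] 0) (𝓝 (α / c)) :=
  (tendsto_mul_const_rpow hc tendsto_const_nhds).congr fun σ ↦ by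
    rw [Real.rpow_sub_one hc.ne']; ring

end Mass

section Weight

variable {τ : ℝ} {m : ℕ}

lemma nggWeight_eq_tilt_one (hτ : 0 < τ) (hm : m ≠ 0) (a σ : ℝ) (k : ℕ) :
    nggWeight a τ σ m k = nggWeight (a * τ ^ σ) 1 σ m k := by
  have hscale (x : ℝ) (hx : 0 < x) :
      τ * ((τ * x) ^ (m - 1) * (τ + τ * x) ^ (-((m : ℝ) - k * σ)) *
        Real.exp (-(a / σ) * ((τ + τ * x) ^ σ - τ ^ σ))) =
      (τ ^ σ) ^ k * (x ^ (m - 1) * (1 + x) ^ (-((m : ℝ) - k * σ)) *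
        Real.exp (-(a * τ ^ σ / σ) * ((1 + x) ^ σ - 1 ^ σ))) := by
    have hpow : τ * τ ^ (m - 1) * τ ^ (-((m : ℝ) - k * σ)) = (τ ^ σ) ^ k := by
      rw [mul_pow_sub_one hm, neg_sub, Real.rpow_sub_natCast hτ.ne', mul_comm (k : ℝ),
        Real.rpow_mul_natCast hτ.le, mul_div_cancel₀ _ (by positivity)]
    have hexp : -(a / σ) * (τ ^ σ * (1 + x) ^ σ - τ ^ σ) =
        -(a * τ ^ σ / σ) * ((1 + x) ^ σ - 1 ^ σ) := by
      rw [Real.one_rpow]; ring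
    rw [← mul_one_add, Real.mul_rpow hτ.le (by positivity), Real.mul_rpow hτ.le (by positivity),
      hexp, mul_pow, ← hpow]
    ring
  rw [nggWeight, nggWeight, ← mul_zero τ, ← integral_comp_mul_left_Ioi' _ _ hτ, mul_zero,
    smul_eq_mul, ← integral_const_mul, setIntegral_congr_fun measurableSet_Ioi hscale,
    integral_const_mul, mul_pow]
  ring

variable {a : ℝ → ℝ} {θ : ℝ}

lemma tendsto_nggWeight_tilt_one (hθ : 0 < θ) (hm : m ≠ 0) (ha : Tendsto a (𝓝[>] 0) (𝓝 θ))
    (k : ℕ) :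
    Tendsto (fun σ ↦ nggWeight (a σ) 1 σ m k) (𝓝[>] 0) (𝓝 (θ ^ k / risingFactorial θ m)) := by
  have hm₀ : (0 : ℝ) < m := by positivity
  have hp : Tendsto (fun σ : ℝ ↦ -((m : ℝ) - k * σ)) (𝓝[>] 0) (𝓝 (-m)) := by
    have : Continuous fun σ : ℝ ↦ -((m : ℝ) - k * σ) := by fun_prop
    simpa using (this.tendsto 0).mono_left nhdsWithin_le_nhds
  have hint := tendsto_integral_rpow_mul_exp_rpow_sub_one hm₀ hθ hp ha
  have hlim : θ ^ k / risingFactorial θ m = θ ^ k / Real.Gamma m * beta m θ := by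
    rw [beta_natCast_left hθ, div_mul_div_cancel₀ (Real.Gamma_pos_of_pos hm₀).ne']
  rw [hlim]
  simpa only [nggWeight, Real.one_rpow, mul_assoc, ← Nat.cast_pred (Nat.pos_of_ne_zero hm),
    Real.rpow_natCast] using ((ha.pow k).div_const (Real.Gamma m)).mul hint

lemma tendsto_nggWeight (hθ : 0 < θ) (hτ : 0 < τ) (hm : m ≠ 0)
    (ha : Tendsto a (𝓝[>] 0) (𝓝 θ)) (k : ℕ) :
    Tendsto (fun σ ↦ nggWeight (a σ) τ σ m k) (𝓝[>] 0) (𝓝 (θ ^ k / risingFactorial θ m)) := by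
  simpa only [nggWeight_eq_tilt_one hτ hm] using
    tendsto_nggWeight_tilt_one hθ hm (tendsto_mul_const_rpow hτ ha) k

end Weight

theorem stmt18_general {ι : Type*} {a : ℝ → ℝ} {θ τ : ℝ} {m : ℕ} (hθ : 0 < θ) (hτ : 0 < τ)
    (hm : m ≠ 0) (ha : Tendsto a (𝓝[>] 0) (𝓝 θ)) (k : ℕ) (s : Finset ι) (n : ι → ℕ) :
    Tendsto (fun σ ↦ nggWeight (a σ) τ σ m k * ∏ i ∈ s, risingFactorial (1 - σ) (n i)) (𝓝[>] 0)
      (𝓝 (θ ^ k / risingFactorial θ m * ∏ i ∈ s, ((n i).factorial : ℝ))) :=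
  (tendsto_nggWeight hθ hτ hm ha k).mul
    ((tendsto_prod_risingFactorial_one_sub s n).mono_left nhdsWithin_le_nhds)

/-- As `σ → 0⁺`, the NGGP partition probability `V_{m,k} ∏ᵢ (1−σ)_(nᵢ−1)` converges
to the Dirichlet process (Ewens-type) quantity `((α/2)^k/(α/2)_(m)) ∏ᵢ (nᵢ−1)!`. -/
theorem stmt18 (α : ℝ) (hα : 0 < α) (m k : ℕ) (hk : 1 ≤ k) (hkm : k ≤ m)
    (n : Fin k → ℕ) (hn : ∀ i, 0 < n i) (hsum : ∑ i, n i = m) :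
    Filter.Tendsto
      (fun σ : ℝ =>
        (((α * (2 : ℝ) ^ (σ - 1)) ^ k / Real.Gamma m) *
            ∫ x in Set.Ioi (0 : ℝ),
              x ^ (m - 1) * ((1 / 2 : ℝ) + x) ^ (-((m : ℝ) - k * σ)) *
                Real.exp (-(α * (2 : ℝ) ^ (σ - 1) / σ) *
                  (((1 / 2 : ℝ) + x) ^ σ - (2 : ℝ) ^ (-σ)))) *
          ∏ i, risingFactorial (1 - σ) (n i - 1))
      (nhdsWithin 0 (Set.Ioi 0))
      (nhds (((α / 2) ^ k / risingFactorial (α / 2) m) *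
        ∏ i, ((n i - 1).factorial : ℝ))) := by
  simpa [nggWeight, Real.rpow_neg, Real.inv_rpow] using
    stmt18_general (half_pos hα) one_half_pos (m := m) (by lia) (tendsto_mul_rpow_sub_one two_pos α)
      k Finset.univ (fun i ↦ n i - 1)
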